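/- Let V be a (purely even) complex vector space, Sym(V) the symmetric Hopf algebra on V, (·|·) a Laplace pairing on Sym(V), and ∘ the twisted product a ∘ b = Σ (a₍₁₎|b₍₁₎) a₍₂₎b₍₂₎. Then for all a₁,…,aₙ, b ∈ V one has (a₁∨⋯∨aₙ) ∘ b = a₁∨⋯∨aₙ∨b + Σ_{j=1}^{n} (aⱼ|b) a₁∨⋯∨a_{j−1}∨a_{j+1}∨⋯∨aₙ. -/

import Mathlib

/-!
The contraction `D_b(a) = Σ (a₍₁₎|b) a₍₂₎` with a primitive element `b` governs the twisted product:
since `Δb = b ⊗ 1 + 1 ⊗ b` and `(·|1) = ε`, the counit law gives `a ∘ b = D_b(a) + a b`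
(`twist_eq_contract_add_mul`).

For primitive `b`, the Laplace identity reads `(x y|b) = (x|b) ε(y) + ε(x) (y|b)`. Multiplicativity of
the coproduct and the counit laws then make `D_b` a derivation (`contract_mul`). On a primitive `v`
its value is `(v|b) 1`, because `(1|b) = ε(b) = 0`, so the Leibniz rule along `a₁ ∨ ⋯ ∨ aₙ` produces the
sum over omitted factors (`contract_list_prod`).
-/

noncomputable section

open scoped TensorProduct

/-- The sign `(−1)^p` for a parity `p ∈ ℤ/2`. -/
def sgn (p : ZMod 2) : ℂ := (-1 : ℂ) ^ p.val

/-- The Koszul sign `(−1)^{pq}` for parities `p, q ∈ ℤ/2`. -/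
def ksign (p q : ZMod 2) : ℂ := (-1 : ℂ) ^ (p * q).val

/-- A Hopf superalgebra over `ℂ`: a `ℤ/2`-graded associative unital `ℂ`-algebra
(the grading is recorded by the parity function `par`, every element being
treated as homogeneous of parity `par a`), together with an even coproduct
`comul` presented with a chosen finite Sweedler decomposition
`Δ a = ∑ i, c1 a i ⊗ c2 a i`, a counit (an algebra map `H → ℂ`) and an
antipode, satisfying the Hopf superalgebra axioms with Koszul signs. -/
structure HopfSA (H : Type) [Ring H] [Algebra ℂ H] where
  par : H → ZMod 2
  par_one : par 1 = 0
  par_mul : ∀ a b : H, par (a * b) = par a + par b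
  n : H → ℕ
  c1 : ∀ a : H, Fin (n a) → H
  c2 : ∀ a : H, Fin (n a) → H
  comul : H →ₗ[ℂ] H ⊗[ℂ] H
  comul_eq : ∀ a : H, comul a = ∑ i, c1 a i ⊗ₜ[ℂ] c2 a i
  par_comul : ∀ (a : H) (i : Fin (n a)), par (c1 a i) + par (c2 a i) = par a
  counit : H →ₐ[ℂ] ℂ
  counit_even : ∀ a : H, par a = 1 → counit a = 0
  comul_one : comul 1 = (1 : H) ⊗ₜ[ℂ] (1 : H)
  comul_mul : ∀ a b : H, comul (a * b) =
    ∑ i, ∑ j, ksign (par (c2 a i)) (par (c1 b j)) •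
      ((c1 a i * c1 b j) ⊗ₜ[ℂ] (c2 a i * c2 b j))
  coassoc : ∀ a : H,
    (TensorProduct.assoc ℂ H H H) ((LinearMap.rTensor H comul) (comul a)) =
      (LinearMap.lTensor H comul) (comul a)
  counit_comul_left : ∀ a : H, ∑ i, counit (c1 a i) • c2 a i = a
  counit_comul_right : ∀ a : H, ∑ i, counit (c2 a i) • c1 a i = a
  antipode : H →ₗ[ℂ] H
  antipode_left : ∀ a : H, ∑ i, antipode (c1 a i) * c2 a i = algebraMap ℂ H (counit a)
  antipode_right : ∀ a : H, ∑ i, c1 a i * antipode (c2 a i) = algebraMap ℂ H (counit a)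

variable {H : Type} [Ring H] [Algebra ℂ H]

/-- Graded commutativity: `a b = (−1)^{|a||b|} b a`. -/
def GradedComm (S : HopfSA H) : Prop :=
  ∀ a b : H, a * b = ksign (S.par a) (S.par b) • (b * a)

/-- Graded cocommutativity: `Σ a₍₁₎ ⊗ a₍₂₎ = Σ (−1)^{|a₍₁₎||a₍₂₎|} a₍₂₎ ⊗ a₍₁₎`. -/
def GradedCocomm (S : HopfSA H) : Prop :=
  ∀ a : H, S.comul a =
    ∑ i, ksign (S.par (S.c1 a i)) (S.par (S.c2 a i)) • (S.c2 a i ⊗ₜ[ℂ] S.c1 a i)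

/-- A Laplace pairing on a Hopf superalgebra `S`: an even bilinear map
`(·|·) : H ⊗ H → ℂ` dual to product/coproduct and to unit/counit. -/
structure LaplacePairing (S : HopfSA H) where
  pair : H →ₗ[ℂ] H →ₗ[ℂ] ℂ
  even : ∀ a b : H, S.par a + S.par b = 1 → pair a b = 0
  expand_left : ∀ a a' b : H, pair (a * a') b =
    ∑ i, ksign (S.par a') (S.par (S.c1 b i)) * pair a (S.c1 b i) * pair a' (S.c2 b i)
  expand_right : ∀ a b b' : H, pair a (b * b') =
    ∑ i, ksign (S.par (S.c2 a i)) (S.par b) * pair (S.c1 a i) b * pair (S.c2 a i) b'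
  one_left : ∀ a : H, pair 1 a = S.counit a
  one_right : ∀ a : H, pair a 1 = S.counit a

/-- The twisted product
`a ∘ b = Σ (−1)^{|a₍₂₎||b₍₁₎|} χ(a₍₁₎,b₍₁₎) a₍₂₎b₍₂₎`. -/
def twist (S : HopfSA H) (χ : H → H → ℂ) (a b : H) : H :=
  ∑ i, ∑ j, (ksign (S.par (S.c2 a i)) (S.par (S.c1 b j)) * χ (S.c1 a i) (S.c1 b j)) •
    (S.c2 a i * S.c2 b j)

/-- Iterated twisted product `u¹ ∘ u² ∘ ⋯ ∘ uⁿ` of a list (empty product is `1`). -/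
def twFold (S : HopfSA H) (χ : H → H → ℂ) : List H → H
  | [] => 1
  | [a] => a
  | a :: b :: rest => twist S χ a (twFold S χ (b :: rest))

/-- Convolution product of two bilinear forms:
`(φ⋆ψ)(a,b) = Σ (−1)^{|b₍₁₎||a₍₂₎|} φ(a₍₁₎,b₍₁₎) ψ(a₍₂₎,b₍₂₎)`. -/
def conv2 (S : HopfSA H) (φ ψ : H → H → ℂ) (a b : H) : ℂ :=
  ∑ i, ∑ j, ksign (S.par (S.c1 b j)) (S.par (S.c2 a i)) *
    φ (S.c1 a i) (S.c1 b j) * ψ (S.c2 a i) (S.c2 b j)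

/-- The coboundary of a `1`-cochain `ρ` (with convolution inverse `ρinv`):
`(∂ρ)(a,b) = Σ ρ(a₍₁₎) ρ(b₍₁₎) ρ⁻¹(a₍₂₎ b₍₂₎)`. -/
def cob1 (S : HopfSA H) (ρ ρinv : H → ℂ) (a b : H) : ℂ :=
  ∑ i, ∑ j, ρ (S.c1 a i) * ρ (S.c1 b j) * ρinv (S.c2 a i * S.c2 b j)

/-- A `1`-cochain on `S`: an even convolution-invertible linear map `ρ : H → ℂ`
with `ρ(1) = 1`, bundled with its convolution inverse. -/
structure Cochain1 (S : HopfSA H) where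
  ρ : H →ₗ[ℂ] ℂ
  even : ∀ a : H, S.par a = 1 → ρ a = 0
  rho_one : ρ 1 = 1
  inv : H →ₗ[ℂ] ℂ
  inv_even : ∀ a : H, S.par a = 1 → inv a = 0
  conv_left : ∀ a : H, ∑ i, inv (S.c1 a i) * ρ (S.c2 a i) = S.counit a
  conv_right : ∀ a : H, ∑ i, ρ (S.c1 a i) * inv (S.c2 a i) = S.counit a

/-- A `2`-cocycle on `S`: an even counital convolution-invertible bilinear map
`χ : H ⊗ H → ℂ` satisfying the `2`-cocycle identity, bundled with its
convolution inverse. -/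
structure Cocycle2 (S : HopfSA H) where
  χ : H →ₗ[ℂ] H →ₗ[ℂ] ℂ
  even : ∀ a b : H, S.par a + S.par b = 1 → χ a b = 0
  unital_left : ∀ a : H, χ 1 a = S.counit a
  unital_right : ∀ a : H, χ a 1 = S.counit a
  inv : H →ₗ[ℂ] H →ₗ[ℂ] ℂ
  conv_left : ∀ a b : H,
    conv2 S (fun x y => inv x y) (fun x y => χ x y) a b = S.counit a * S.counit b
  conv_right : ∀ a b : H,
    conv2 S (fun x y => χ x y) (fun x y => inv x y) a b = S.counit a * S.counit b
  cocycle : ∀ a b c : H,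
    (∑ i, ∑ j, ksign (S.par (S.c2 b i)) (S.par (S.c1 c j)) *
        χ (S.c1 b i) (S.c1 c j) * χ a (S.c2 b i * S.c2 c j)) =
    (∑ i, ∑ j, ksign (S.par (S.c2 a i)) (S.par (S.c1 b j)) *
        χ (S.c1 a i) (S.c1 b j) * χ (S.c2 a i * S.c2 b j) c)

/-- The multiset of Sweedler pairs `(a₍₁₎, a₍₂₎)` of `a`. -/
def sweedlerM (S : HopfSA H) (a : H) : Multiset (H × H) :=
  (Finset.univ : Finset (Fin (S.n a))).val.map fun i => (S.c1 a i, S.c2 a i)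

/-- The iterated coproduct `Δᵏ a`, presented as a multiset of `(k+1)`-tuples
(lists) of Sweedler legs; `Δ^{k+1} = (id ⊗ ⋯ ⊗ id ⊗ Δ) Δᵏ`. -/
def itComul (S : HopfSA H) : ℕ → H → Multiset (List H)
  | 0, a => {[a]}
  | k + 1, a => (itComul S k a).bind fun l =>
      (sweedlerM S (l.getLastD 0)).map fun p => l.dropLast ++ [p.1, p.2]

/-- Sum, over all choices `g` with `g i` drawn from the multiset `Ms i` for
`i < k` (and `g i = d` otherwise), of `F g`. -/
def selSum {α M : Type} [AddCommMonoid M] (d : α) :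
    ℕ → (ℕ → Multiset α) → ((ℕ → α) → M) → M
  | 0, _, F => F fun _ => d
  | k + 1, Ms, F =>
      ((Ms k).map fun x => selSum d k Ms fun g => F (Function.update g k x)).sum

/-- A model of the graded symmetric Hopf superalgebra `Sym(V)` on the super
vector space `V = grade 1`: a graded commutative, graded cocommutative Hopf
superalgebra together with an internal `ℕ`-grading for which `grade 0 = ℂ·1`,
the degree-one part `V = grade 1` consists of primitive elements and generates
the algebra, and the counit vanishes in positive degrees.  (Over `ℂ`, by the
Milnor–Moore/Leray structure theory, these axioms characterize `Sym(V)`.) -/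
structure SymSA (H : Type) [Ring H] [Algebra ℂ H] where
  S : HopfSA H
  comm : GradedComm S
  cocomm : GradedCocomm S
  grade : ℕ → Submodule ℂ H
  internal : DirectSum.IsInternal grade
  grade_zero : grade 0 = Submodule.span ℂ {(1 : H)}
  grade_mul : ∀ p q : ℕ, ∀ a ∈ grade p, ∀ b ∈ grade q, a * b ∈ grade (p + q)
  gen : Algebra.adjoin ℂ ((grade 1 : Submodule ℂ H) : Set H) = ⊤
  prim : ∀ v ∈ grade 1, S.comul v = v ⊗ₜ[ℂ] (1 : H) + (1 : H) ⊗ₜ[ℂ] v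
  counit_grade : ∀ p : ℕ, 0 < p → ∀ a ∈ grade p, S.counit a = 0

lemma ksign_zero_zero : ksign 0 0 = 1 := by simp [ksign]

/-- The contraction `x ↦ Σ f(x₍₁₎) x₍₂₎` of the first Sweedler leg with a linear form `f`. -/
def contract (S : HopfSA H) (f : H →ₗ[ℂ] ℂ) : H →ₗ[ℂ] H :=
  (TensorProduct.lid ℂ H).toLinearMap ∘ₗ LinearMap.rTensor H f ∘ₗ S.comul

lemma contract_apply (S : HopfSA H) (f : H →ₗ[ℂ] ℂ) (x : H) :
    contract S f x = ∑ i, f (S.c1 x i) • S.c2 x i := by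
  simp [contract, S.comul_eq x]

/-- The Leibniz rule for a contraction, in the even case: it holds for every `ε`-derivation `f`. -/
lemma contract_mul (S : HopfSA H) (heven : ∀ x : H, S.par x = 0) (f : H →ₗ[ℂ] ℂ)
    (hf : ∀ x y : H, f (x * y) = f x * S.counit y + S.counit x * f y) (x y : H) :
    contract S f (x * y) = contract S f x * y + x * contract S f y := by
  have h : contract S f (x * y) =
      ∑ i, ∑ j, f (S.c1 x i * S.c1 y j) • (S.c2 x i * S.c2 y j) := by
    simp [contract, S.comul_mul x y, heven, ksign_zero_zero]
  have hx := S.counit_comul_left x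
  have hy := S.counit_comul_left y
  rw [h, contract_apply, contract_apply]
  conv_rhs =>
    congr
    · rw [← hy]
    · rw [← hx]
  simp only [Finset.sum_mul_sum, ← Finset.sum_add_distrib, hf, add_smul, smul_mul_smul_comm]

/-- For `b` primitive, a sum over the Sweedler legs of `b` of a bilinear expression has only the two
terms coming from `b ⊗ 1` and `1 ⊗ b`. -/
lemma sum_sweedler_of_prim {E : Type*} [AddCommGroup E] [Module ℂ E] (S : HopfSA H) {b : H}
    (hb : S.comul b = b ⊗ₜ[ℂ] (1 : H) + (1 : H) ⊗ₜ[ℂ] b) (B : H →ₗ[ℂ] H →ₗ[ℂ] E) :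
    ∑ j, B (S.c1 b j) (S.c2 b j) = B b 1 + B 1 b := by
  simpa [S.comul_eq b] using congrArg (TensorProduct.lift B) hb

lemma pair_mul_of_prim (S : HopfSA H) (heven : ∀ x : H, S.par x = 0) (L : LaplacePairing S) {b : H}
    (hb : S.comul b = b ⊗ₜ[ℂ] (1 : H) + (1 : H) ⊗ₜ[ℂ] b) (x y : H) :
    L.pair (x * y) b = L.pair x b * S.counit y + S.counit x * L.pair y b := by
  have h := sum_sweedler_of_prim S hb ((LinearMap.mul ℂ ℂ).compl₁₂ (L.pair x) (L.pair y))
  simpa [L.expand_left, heven, ksign_zero_zero, L.one_right] using h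

lemma twist_eq_contract_add_mul (S : HopfSA H) (heven : ∀ x : H, S.par x = 0)
    (L : LaplacePairing S) {b : H}
    (hb : S.comul b = b ⊗ₜ[ℂ] (1 : H) + (1 : H) ⊗ₜ[ℂ] b) (x : H) :
    twist S (fun x y => L.pair x y) x b = x * b + contract S (L.pair.flip b) x := by
  have key (u v : H) : ∑ j, L.pair u (S.c1 b j) • (v * S.c2 b j) =
      L.pair u b • v + S.counit u • (v * b) := by
    have h := sum_sweedler_of_prim S hb
      ((LinearMap.lsmul ℂ H).compl₁₂ (L.pair u) (LinearMap.mulLeft ℂ v))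
    simpa [L.one_right] using h
  simp only [twist, heven, ksign_zero_zero, one_mul, key, Finset.sum_add_distrib, contract_apply,
    LinearMap.flip_apply]
  simp only [← smul_mul_assoc, ← Finset.sum_mul, S.counit_comul_left x]
  rw [add_comm]

/-- A contraction with an `ε`-derivation sends a product of primitive elements to the sum over its
factors `v` of `f(v)` times the product of the remaining ones. -/
lemma contract_list_prod (S : HopfSA H) (heven : ∀ x : H, S.par x = 0) (f : H →ₗ[ℂ] ℂ)
    (hf : ∀ x y : H, f (x * y) = f x * S.counit y + S.counit x * f y) (hf1 : f 1 = 0)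
    {n : ℕ} (a : Fin n → H)
    (ha : ∀ i, S.comul (a i) = a i ⊗ₜ[ℂ] (1 : H) + (1 : H) ⊗ₜ[ℂ] a i) :
    contract S f (List.ofFn a).prod =
      ∑ j : Fin n, f (a j) • ((List.ofFn a).eraseIdx (j : ℕ)).prod := by
  induction n with
  | zero => simp [contract, S.comul_one, hf1]
  | succ n ih =>
    have h0 : contract S f (a 0) = f (a 0) • 1 := by simp [contract, ha 0, hf1]
    rw [List.ofFn_succ, List.prod_cons, contract_mul S heven f hf, h0,
      ih (fun i => a i.succ) fun i => ha i.succ]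
    simp [Fin.sum_univ_succ, Finset.mul_sum]

/-- in the (purely even) symmetric Hopf algebra `Sym(V)`, for
`a₁,…,aₙ, b ∈ V` one has
`(a₁∨⋯∨aₙ) ∘ b = a₁∨⋯∨aₙ∨b + Σⱼ (aⱼ|b) a₁∨⋯∨âⱼ∨⋯∨aₙ`. -/
theorem twisted_product_with_primitive (M : SymSA H)
    (heven : ∀ a : H, M.S.par a = 0) (L : LaplacePairing M.S)
    {n : ℕ} (a : Fin n → H) (b : H)
    (ha : ∀ i, a i ∈ M.grade 1) (hb : b ∈ M.grade 1) :
    twist M.S (fun x y => L.pair x y) (List.ofFn a).prod b =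
      (List.ofFn a).prod * b +
        ∑ j : Fin n, L.pair (a j) b • ((List.ofFn a).eraseIdx (j : ℕ)).prod := by
  have hb' := M.prim b hb
  rw [twist_eq_contract_add_mul M.S heven L hb', contract_list_prod M.S heven (L.pair.flip b)
    (fun x y => pair_mul_of_prim M.S heven L hb' x y) _ a fun i => M.prim _ (ha i)]
  · simp
  · simp [L.one_left, M.counit_grade 1 one_pos b hb]

end
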